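/- If a representation (Y₁, Y₂, Y₃) of the Kronecker quiver Q₃ with dimension vector (2,2) is Θ-semistable but not Θ-stable for Θ = (−1, 1), then it admits a subrepresentation (W₁, W₂) with dim W₁ = dim W₂ = 1, and consequently there exist g₁, g₂ ∈ GL₂(ℂ) such that g₂Yᵢg₁⁻¹ is upper triangular for each i = 1, 2, 3. (The strictly semistable analysis used in Corollary 4.3 and in the Lemma of Section 5.) -/

import Mathlib

open Matrix

noncomputable section

/-- The underlying vector space `ℂ²`. -/
abbrev V2 : Type := Fin 2 → ℂ

/-- 2×2 complex matrices. -/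
abbrev M2 : Type := Matrix (Fin 2) (Fin 2) ℂ

/-- `Θ`-semistability (`Θ = (-1,1)`) of a representation of the Kronecker quiver
`Q₃` with dimension vector `(2,2)`: `-dim W₁ + dim W₂ ≥ 0` for every
subrepresentation `(W₁, W₂)`. -/
def ThetaSemistable (Y : Fin 3 → M2) : Prop :=
  ∀ W₁ W₂ : Submodule ℂ V2, (∀ i, W₁.map (Y i).mulVecLin ≤ W₂) →
    (0 : ℤ) ≤ -(Module.finrank ℂ W₁ : ℤ) + (Module.finrank ℂ W₂ : ℤ)

/-- `Θ`-stability (`Θ = (-1,1)`): `-dim W₁ + dim W₂ > 0` for every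
subrepresentation other than `(0,0)` and `(ℂ²,ℂ²)`. -/
def ThetaStable (Y : Fin 3 → M2) : Prop :=
  ∀ W₁ W₂ : Submodule ℂ V2, (∀ i, W₁.map (Y i).mulVecLin ≤ W₂) →
    ¬(W₁ = ⊥ ∧ W₂ = ⊥) → ¬(W₁ = ⊤ ∧ W₂ = ⊤) →
    (0 : ℤ) < -(Module.finrank ℂ W₁ : ℤ) + (Module.finrank ℂ W₂ : ℤ)

/-!
A semistable representation that is not stable has a subrepresentation `(W₁, W₂)` of weight zero
other than `(0, 0)` and the whole representation, so `dim W₁ = dim W₂` lies strictly between `0`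
and the full dimension. Extend bases of `W₁` and `W₂` to bases of the two ambient spaces and take
these as the columns of `g₁⁻¹` and `g₂⁻¹`: the inclusions `Yᵢ(W₁) ⊆ W₂` then say that the lower-left
block of every `g₂Yᵢg₁⁻¹` vanishes.
-/

section Kronecker

open Module

theorem exists_basis_flag_eq {K V : Type*} [Field K] [AddCommGroup V] [Module K V]
    [FiniteDimensional K V] {n : ℕ} (hn : finrank K V = n) (W : Submodule K V) :
    ∃ (b : Basis (Fin n) K V) (k : Fin (n + 1)), (k : ℕ) = finrank K W ∧ b.flag k = W := by
  obtain rfl : finrank K W + finrank K (V ⧸ W) = n := by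
    rw [add_comm, W.finrank_quotient_add_finrank, hn]
  let b := (Basis.sumQuot (finBasis K W) (finBasis K (V ⧸ W))).reindex finSumFinEquiv
  have b_castAdd (j : Fin (finrank K W)) : b (Fin.castAdd _ j) = finBasis K W j := by simp [b]
  refine ⟨b, ⟨finrank K W, by lia⟩, rfl, le_antisymm ?_ ?_⟩
  · refine b.flag_le_iff.2 fun i hi ↦ ?_
    have b_apply : b i = finBasis K W (i.castLT hi) := b_castAdd (i.castLT hi)
    exact b_apply ▸ (finBasis K W _).2
  · rw [← Submodule.comap_subtype_eq_top, eq_top_iff, ← (finBasis K W).span_eq,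
      Submodule.span_le]
    rintro _ ⟨j, rfl⟩
    rw [SetLike.mem_coe, Submodule.mem_comap, Submodule.subtype_apply, ← b_castAdd]
    exact b.self_mem_flag (Fin.lt_def.2 j.2)

theorem toMatrix_apply_eq_zero_of_map_flag_le {R M M' : Type*} [CommRing R]
    [AddCommGroup M] [Module R M] [AddCommGroup M'] [Module R M'] {m n : ℕ}
    {b : Basis (Fin n) R M} {b' : Basis (Fin m) R M'} {f : M →ₗ[R] M'}
    {k : Fin (n + 1)} {l : Fin (m + 1)}
    (h : (b.flag k).map f ≤ b'.flag l) {r : Fin m} {c : Fin n}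
    (hr : l ≤ r.castSucc) (hc : c.castSucc < k) : LinearMap.toMatrix b b' f r c = 0 := by
  have f_mem : f (b c) ∈ b'.flag l := h (Submodule.mem_map_of_mem (b.self_mem_flag hc))
  rw [LinearMap.toMatrix_apply]
  exact b'.flag_le_ker_coord hr f_mem

theorem finrank_pos_and_lt_of_finrank_eq {K V V' : Type*} [DivisionRing K]
    [AddCommGroup V] [Module K V] [FiniteDimensional K V]
    [AddCommGroup V'] [Module K V'] [FiniteDimensional K V']
    (hV : finrank K V = finrank K V') {W : Submodule K V} {W' : Submodule K V'}
    (hW : finrank K W = finrank K W') (h_bot : ¬(W = ⊥ ∧ W' = ⊥)) (h_top : ¬(W = ⊤ ∧ W' = ⊤)) :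
    0 < finrank K W ∧ finrank K W < finrank K V := by
  constructor
  · refine Nat.pos_of_ne_zero fun h ↦ h_bot ?_
    exact ⟨Submodule.finrank_eq_zero.1 h, Submodule.finrank_eq_zero.1 (hW ▸ h)⟩
  · refine W.finrank_le.lt_of_ne fun h ↦ h_top ?_
    exact ⟨Submodule.eq_top_of_finrank_eq h, Submodule.eq_top_of_finrank_eq (hW ▸ h.trans hV)⟩

variable {ι K : Type*} [Field K] {m n : ℕ}

/-- A pair of subspaces `(W₁, W₂)` is a subrepresentation of the representation `Y` of the
Kronecker quiver with arrows indexed by `ι`. -/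
def IsSubrepresentation (Y : ι → Matrix (Fin m) (Fin n) K)
    (W₁ : Submodule K (Fin n → K)) (W₂ : Submodule K (Fin m → K)) : Prop :=
  ∀ i, W₁.map (Y i).mulVecLin ≤ W₂

/-- `Θ`-semistability for `Θ = (-1, 1)` of a representation of dimension vector `(n, n)` of the
Kronecker quiver with arrows indexed by `ι`. For `ι = Fin 3`, `n = 2` and `K = ℂ` this unfolds to
`ThetaSemistable`. -/
def KroneckerSemistable (Y : ι → Matrix (Fin n) (Fin n) K) : Prop :=
  ∀ W₁ W₂ : Submodule K (Fin n → K), IsSubrepresentation Y W₁ W₂ →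
    (0 : ℤ) ≤ -(finrank K W₁ : ℤ) + (finrank K W₂ : ℤ)

/-- `Θ`-stability for `Θ = (-1, 1)` of a representation of dimension vector `(n, n)` of the
Kronecker quiver with arrows indexed by `ι`. For `ι = Fin 3`, `n = 2` and `K = ℂ` this unfolds to
`ThetaStable`. -/
def KroneckerStable (Y : ι → Matrix (Fin n) (Fin n) K) : Prop :=
  ∀ W₁ W₂ : Submodule K (Fin n → K), IsSubrepresentation Y W₁ W₂ →
    ¬(W₁ = ⊥ ∧ W₂ = ⊥) → ¬(W₁ = ⊤ ∧ W₂ = ⊤) →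
    (0 : ℤ) < -(finrank K W₁ : ℤ) + (finrank K W₂ : ℤ)

theorem KroneckerSemistable.exists_isSubrepresentation_finrank_eq
    {Y : ι → Matrix (Fin n) (Fin n) K} (hss : KroneckerSemistable Y) (hns : ¬KroneckerStable Y) :
    ∃ d, 0 < d ∧ d < n ∧ ∃ W₁ W₂ : Submodule K (Fin n → K),
      IsSubrepresentation Y W₁ W₂ ∧ finrank K W₁ = d ∧ finrank K W₂ = d := by
  unfold KroneckerStable at hns
  push Not at hns
  obtain ⟨W₁, W₂, hW, h_bot, h_top, weight_nonpos⟩ := hns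
  have weight_nonneg := hss W₁ W₂ hW
  have finrank_eq : finrank K W₁ = finrank K W₂ := by lia
  obtain ⟨h_pos, h_lt⟩ := finrank_pos_and_lt_of_finrank_eq rfl finrank_eq
    (not_and.2 h_bot) (not_and.2 h_top)
  rw [finrank_fin_fun] at h_lt
  exact ⟨finrank K W₁, h_pos, h_lt, W₁, W₂, hW, rfl, finrank_eq.symm⟩

theorem IsSubrepresentation.exists_block_triangular {Y : ι → Matrix (Fin m) (Fin n) K}
    {W₁ : Submodule K (Fin n → K)} {W₂ : Submodule K (Fin m → K)}
    (hW : IsSubrepresentation Y W₁ W₂) :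
    ∃ (g₁ : Matrix (Fin n) (Fin n) K) (g₂ : Matrix (Fin m) (Fin m) K),
      IsUnit g₁.det ∧ IsUnit g₂.det ∧ ∀ i (r : Fin m) (c : Fin n),
        finrank K W₂ ≤ r → c < finrank K W₁ → (g₂ * Y i * g₁⁻¹) r c = 0 := by
  obtain ⟨b₁, k₁, hk₁, hb₁⟩ := exists_basis_flag_eq (finrank_fin_fun K) W₁
  obtain ⟨b₂, k₂, hk₂, hb₂⟩ := exists_basis_flag_eq (finrank_fin_fun K) W₂
  let e₁ := Pi.basisFun K (Fin n)
  let e₂ := Pi.basisFun K (Fin m)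
  refine ⟨b₁.toMatrix e₁, b₂.toMatrix e₂,
    Matrix.isUnit_det_of_right_inverse (b₁.toMatrix_mul_toMatrix_flip e₁),
    Matrix.isUnit_det_of_right_inverse (b₂.toMatrix_mul_toMatrix_flip e₂), fun i r c hr hc ↦ ?_⟩
  have change_of_basis : b₂.toMatrix e₂ * Y i * (b₁.toMatrix e₁)⁻¹ =
      LinearMap.toMatrix b₁ b₂ (Y i).mulVecLin := by
    rw [Matrix.inv_eq_right_inv (b₁.toMatrix_mul_toMatrix_flip e₁),
      ← basis_toMatrix_mul_linearMap_toMatrix_mul_basis_toMatrix b₁ e₁ b₂ e₂,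
      ← Matrix.toLin'_apply', ← Matrix.toLin_eq_toLin', LinearMap.toMatrix_toLin]
  rw [change_of_basis]
  have map_flag_le : (b₁.flag k₁).map (Y i).mulVecLin ≤ b₂.flag k₂ := by
    rw [hb₁, hb₂]
    exact hW i
  exact toMatrix_apply_eq_zero_of_map_flag_le map_flag_le
    (Fin.le_def.2 (hk₂.trans_le hr)) (Fin.lt_def.2 (hc.trans_eq hk₁.symm))

theorem strictly_semistable_upper_triangular_general (Y : ι → Matrix (Fin n) (Fin n) K)
    (hss : KroneckerSemistable Y) (hns : ¬KroneckerStable Y) :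
    ∃ d, 0 < d ∧ d < n ∧
      (∃ W₁ W₂ : Submodule K (Fin n → K), IsSubrepresentation Y W₁ W₂ ∧
        finrank K W₁ = d ∧ finrank K W₂ = d) ∧
      (∃ g₁ g₂ : Matrix (Fin n) (Fin n) K, IsUnit g₁.det ∧ IsUnit g₂.det ∧
        ∀ i (r c : Fin n), d ≤ r → c < d → (g₂ * Y i * g₁⁻¹) r c = 0) := by
  obtain ⟨d, h_pos, h_lt, W₁, W₂, hW, hW₁, hW₂⟩ := hss.exists_isSubrepresentation_finrank_eq hns
  refine ⟨d, h_pos, h_lt, ⟨W₁, W₂, hW, hW₁, hW₂⟩, ?_⟩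
  simpa only [hW₁, hW₂] using hW.exists_block_triangular

end Kronecker

/-- A strictly `Θ`-semistable representation of `Q₃` with dimension vector
`(2,2)` admits a subrepresentation of dimension vector `(1,1)`, and consequently
can be brought into simultaneous upper triangular form by the
`GL₂(ℂ) × GL₂(ℂ)` action. -/
theorem strictly_semistable_upper_triangular (Y : Fin 3 → M2)
    (hss : ThetaSemistable Y) (hns : ¬ThetaStable Y) :
    (∃ W₁ W₂ : Submodule ℂ V2, (∀ i, W₁.map (Y i).mulVecLin ≤ W₂) ∧
      Module.finrank ℂ W₁ = 1 ∧ Module.finrank ℂ W₂ = 1) ∧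
    (∃ g₁ g₂ : M2, IsUnit g₁.det ∧ IsUnit g₂.det ∧
      ∀ i : Fin 3, (g₂ * Y i * g₁⁻¹) 1 0 = 0) := by
  obtain ⟨d, h_pos, h_lt, h_sub, g₁, g₂, hg₁, hg₂, hY⟩ :=
    strictly_semistable_upper_triangular_general Y hss hns
  obtain rfl : d = 1 := by lia
  exact ⟨h_sub, g₁, g₂, hg₁, hg₂, fun i ↦ hY i 1 0 le_rfl Nat.one_pos⟩
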